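/- (Scattering lemma.) Let s ≥ r ≥ 1 be integers. There exist a matrix W ∈ ℝ^{s×r} and two absolute constants c_0 ∈ (1/2, 1) and c_1 > 0 such that ‖W‖_F ≤ 1 and, for every subset B ⊂ {1,…,s} with |B| ≥ c_0 s and every q ∈ [1,2], the submatrix W_{B*} of rows of W indexed by B satisfies ‖W_{B*}‖_{S_q} ≥ c_1 r^{1/q − 1/2}. -/

import Mathlib

open MeasureTheory ProbabilityTheory Matrix Set
open scoped ENNReal NNReal

noncomputable section

/-- Euclidean (ℓ₂) norm of a finitely indexed real vector. -/
def l2norm {I : Type*} [Fintype I] (v : I → ℝ) : ℝ := Real.sqrt (∑ i, v i ^ 2)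

/-- Frobenius norm of a real matrix. -/
def frobNorm {I J : Type*} [Fintype I] [Fintype J] (M : Matrix I J ℝ) : ℝ :=
  Real.sqrt (∑ i, ∑ j, M i j ^ 2)

/-- ℓ₂/ℓ₁ norm: the sum of the ℓ₂ norms of the rows. -/
def norm21 {I J : Type*} [Fintype I] [Fintype J] (M : Matrix I J ℝ) : ℝ :=
  ∑ i, l2norm (M i)

open Classical in
/-- Row support: indices of nonzero rows. -/
def rowSupport {I J : Type*} [Fintype I] [Fintype J] (M : Matrix I J ℝ) : Finset I :=
  Finset.univ.filter (fun i => M i ≠ 0)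

/-- The j-th largest singular value (j ≥ 1), via the Courant–Fischer max–min
characterization: `σ_j(M) = max_{dim V = j} min_{v ∈ V, ‖v‖=1} ‖Mv‖`. -/
def singularValue {I J : Type*} [Fintype I] [Fintype J] (M : Matrix I J ℝ) (j : ℕ) : ℝ :=
  sSup { t | ∃ V : Submodule ℝ (J → ℝ), Module.finrank ℝ V = j ∧
    t = sInf { u | ∃ v ∈ V, l2norm v = 1 ∧ u = l2norm (M.mulVec v) } }

/-- Operator norm (largest singular value). -/
def opNorm {I J : Type*} [Fintype I] [Fintype J] (M : Matrix I J ℝ) : ℝ :=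
  sSup { t | ∃ v : J → ℝ, l2norm v = 1 ∧ t = l2norm (M.mulVec v) }

/-- Schatten-q norm. -/
def schattenNorm {I J : Type*} [Fintype I] [Fintype J] (M : Matrix I J ℝ) (q : ℝ) : ℝ :=
  (∑ i ∈ Finset.Icc 1 (min (Fintype.card I) (Fintype.card J)), singularValue M i ^ q) ^ (1 / q)

/-- Squared lower k-sparse Riesz constant `κ₋²(k)`:
the minimum over column subsets B with |B| = k of the smallest eigenvalue of X_B' X_B. -/
def kappaMinusSq {n p : ℕ} (X : Matrix (Fin n) (Fin p) ℝ) (k : ℕ) : ℝ :=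
  sInf { t | ∃ B : Finset (Fin p), B.card = k ∧ ∃ v : Fin p → ℝ,
    (∀ i, i ∉ B → v i = 0) ∧ l2norm v = 1 ∧ t = l2norm (X.mulVec v) ^ 2 }

/-- Squared upper k-sparse Riesz constant `κ₊²(k)`. -/
def kappaPlusSq {n p : ℕ} (X : Matrix (Fin n) (Fin p) ℝ) (k : ℕ) : ℝ :=
  sSup { t | ∃ B : Finset (Fin p), B.card = k ∧ ∃ v : Fin p → ℝ,
    (∀ i, i ∉ B → v i = 0) ∧ l2norm v = 1 ∧ t = l2norm (X.mulVec v) ^ 2 }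

def kappaMinus {n p : ℕ} (X : Matrix (Fin n) (Fin p) ℝ) (k : ℕ) : ℝ :=
  Real.sqrt (kappaMinusSq X k)

def kappaPlus {n p : ℕ} (X : Matrix (Fin n) (Fin p) ℝ) (k : ℕ) : ℝ :=
  Real.sqrt (kappaPlusSq X k)

/-- Membership in the parameter space Θ(s, r, d, γ): rank r, all nonzero singular values in
(d, γd], and at most s nonzero rows. (Singular values are automatically nonincreasing.) -/
def memTheta {p m : ℕ} (A : Matrix (Fin p) (Fin m) ℝ) (s r : ℕ) (d γ : ℝ) : Prop :=
  A.rank = r ∧ 0 < d ∧ singularValue A 1 ≤ γ * d ∧ d < singularValue A r ∧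
    (rowSupport A).card ≤ s

/-- `V` is a matrix of top-r right singular vectors of `M`: the columns of `V` are orthonormal
eigenvectors of `MᵀM`, the j-th column with eigenvalue `σ_j(M)²`. -/
def IsRightSingularVectors {I J : Type*} [Fintype I] [Fintype J] {r : ℕ}
    (M : Matrix I J ℝ) (V : Matrix J (Fin r) ℝ) : Prop :=
  Vᵀ * V = 1 ∧ ∀ j : Fin r,
    (Mᵀ * M).mulVec (fun i => V i j) = (singularValue M (j.1 + 1)) ^ 2 • (fun i => V i j)

/-- `U` is a matrix of top-r left singular vectors of `M`. -/
def IsLeftSingularVectors {I J : Type*} [Fintype I] [Fintype J] {r : ℕ}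
    (M : Matrix I J ℝ) (U : Matrix I (Fin r) ℝ) : Prop :=
  IsRightSingularVectors Mᵀ U

instance matrixMeasurableSpace {n m : ℕ} : MeasurableSpace (Matrix (Fin n) (Fin m) ℝ) :=
  (inferInstance : MeasurableSpace (Fin n → Fin m → ℝ))

/-- Law of an n×m random matrix with i.i.d. N(0, v) entries. -/
def gaussianMatrix (n m : ℕ) (v : ℝ≥0) : Measure (Matrix (Fin n) (Fin m) ℝ) :=
  Measure.pi fun _ : Fin n => Measure.pi fun _ : Fin m => gaussianReal 0 v

open Classical in
/-- Kullback–Leibler divergence D(P‖Q). -/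
def klDivM {Ω : Type*} [MeasurableSpace Ω] (P Q : Measure Ω) : ℝ≥0∞ :=
  if P ≪ Q ∧ Integrable (fun x => Real.log (P.rnDeriv Q x).toReal) P
  then ENNReal.ofReal (∫ x, Real.log (P.rnDeriv Q x).toReal ∂P)
  else ∞

/-- ε-packing number of T with respect to the distance ρ: the maximal cardinality of a subset
of T whose pairwise ρ-distances are all at least ε. -/
def packingNumber {α : Type*} (T : Set α) (ρ : α → α → ℝ) (ε : ℝ) : ℕ :=
  sSup { k | ∃ S : Finset α, ↑S ⊆ T ∧ (∀ x ∈ S, ∀ y ∈ S, x ≠ y → ε ≤ ρ x y) ∧ S.card = k }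

/-- Moore–Penrose pseudoinverse (characterized by the four Penrose equations). -/
def IsMoorePenrose {k : ℕ} (M Mi : Matrix (Fin k) (Fin k) ℝ) : Prop :=
  M * Mi * M = M ∧ Mi * M * Mi = Mi ∧ (M * Mi)ᵀ = M * Mi ∧ (Mi * M)ᵀ = Mi * M

/-!
Partition the `s` rows into `r` blocks of size at most `2s/r`, and let row `i` of `W` be `s^(-1/2)`
times the basis vector of the block containing `i`. The columns of every row submatrix `W_B` are
orthogonal, and column `j` has norm `√(n_j / s)`, where `n_j` is the number of rows of `B` in
block `j`. If `c s ≤ |B|`, counting forces at least `c r / 4` of the `n_j` to be at least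
`c s / (2r)`, so `W_B` is bounded below by `√(c / (2r))` on a coordinate subspace of dimension at
least `c r / 4`, and its Schatten norm is at least `(c r / 4)^(1/q) √(c / (2r))`.
-/

open scoped Finset

lemma exists_submodule_le_finrank_eq {K E : Type*} [DivisionRing K] [AddCommGroup E] [Module K E]
    {V : Submodule K E} {k : ℕ} (hk : k ≤ Module.finrank K V) :
    ∃ U ≤ V, Module.finrank K U = k := by
  obtain ⟨b, hb⟩ := exists_linearIndependent_of_le_finrank hk
  refine ⟨(Submodule.span K (Set.range b)).map V.subtype, Submodule.map_subtype_le _ _, ?_⟩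
  rw [Submodule.finrank_map_subtype_eq, finrank_span_eq_card hb, Fintype.card_fin]

section EuclideanNorm

variable {I : Type*} [Fintype I]

lemma l2norm_nonneg (v : I → ℝ) : 0 ≤ l2norm v := Real.sqrt_nonneg _

lemma l2norm_eq_norm_toLp (v : I → ℝ) : l2norm v = ‖WithLp.toLp 2 v‖ := by
  simp [l2norm, EuclideanSpace.norm_eq]

lemma l2norm_smul (a : ℝ) (v : I → ℝ) : l2norm (a • v) = |a| * l2norm v := by
  simp only [l2norm_eq_norm_toLp, WithLp.toLp_smul, norm_smul, Real.norm_eq_abs]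

lemma l2norm_eq_zero {v : I → ℝ} : l2norm v = 0 ↔ v = 0 := by
  rw [l2norm_eq_norm_toLp, norm_eq_zero, WithLp.toLp_eq_zero]

lemma exists_mem_l2norm_eq_one {V : Submodule ℝ (I → ℝ)} (hV : V ≠ ⊥) :
    ∃ v ∈ V, l2norm v = 1 := by
  obtain ⟨v, hvV, hv⟩ := V.exists_mem_ne_zero_of_ne_bot hV
  have hv' : l2norm v ≠ 0 := l2norm_eq_zero.not.mpr hv
  refine ⟨(l2norm v)⁻¹ • v, V.smul_mem _ hvV, ?_⟩
  rw [l2norm_smul, abs_of_nonneg (inv_nonneg.mpr (l2norm_nonneg v)), inv_mul_cancel₀ hv']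

end EuclideanNorm

section SingularValues

variable {I J : Type*} [Fintype I] [Fintype J] {M : Matrix I J ℝ}
  {V : Submodule ℝ (J → ℝ)} {a q : ℝ}

lemma l2norm_mulVec_le (M : Matrix I J ℝ) (v : J → ℝ) :
    l2norm (M *ᵥ v) ≤ frobNorm M * l2norm v := by
  rw [frobNorm, l2norm, l2norm, ← Real.sqrt_mul (by positivity), Finset.sum_mul]
  gcongr with i
  exact Finset.sum_mul_sq_le_sq_mul_sq Finset.univ (M i) v

lemma singularValue_nonneg (M : Matrix I J ℝ) (k : ℕ) : 0 ≤ singularValue M k := by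
  apply Real.sSup_nonneg
  rintro _ ⟨V, -, rfl⟩
  apply Real.sInf_nonneg
  rintro _ ⟨v, -, -, rfl⟩
  exact l2norm_nonneg _

lemma sInf_l2norm_mulVec_le_frobNorm (M : Matrix I J ℝ) (hV : V ≠ ⊥) :
    sInf {u | ∃ v ∈ V, l2norm v = 1 ∧ u = l2norm (M *ᵥ v)} ≤ frobNorm M := by
  obtain ⟨v, hvV, hv⟩ := exists_mem_l2norm_eq_one hV
  have hbdd : BddBelow {u | ∃ v ∈ V, l2norm v = 1 ∧ u = l2norm (M *ᵥ v)} := by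
    refine ⟨0, ?_⟩
    rintro _ ⟨v, -, -, rfl⟩
    exact l2norm_nonneg _
  calc sInf {u | ∃ v ∈ V, l2norm v = 1 ∧ u = l2norm (M *ᵥ v)}
      ≤ l2norm (M *ᵥ v) := csInf_le hbdd ⟨v, hvV, hv, rfl⟩
    _ ≤ frobNorm M := by simpa only [hv, mul_one] using l2norm_mulVec_le M v

lemma le_singularValue_finrank (hV : V ≠ ⊥)
    (hM : ∀ v ∈ V, a * l2norm v ≤ l2norm (M *ᵥ v)) :
    a ≤ singularValue M (Module.finrank ℝ V) := by
  have hle : a ≤ sInf {u | ∃ v ∈ V, l2norm v = 1 ∧ u = l2norm (M *ᵥ v)} := by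
    obtain ⟨v, hvV, hv⟩ := exists_mem_l2norm_eq_one hV
    refine le_csInf ⟨_, v, hvV, hv, rfl⟩ ?_
    rintro _ ⟨v, hvV, hv, rfl⟩
    simpa only [hv, mul_one] using hM v hvV
  refine hle.trans (le_csSup ⟨frobNorm M, ?_⟩ ⟨V, rfl, rfl⟩)
  rintro _ ⟨V', hrank, rfl⟩
  refine sInf_l2norm_mulVec_le_frobNorm M fun hbot => hV ?_
  rwa [hbot, finrank_bot, eq_comm, Submodule.finrank_eq_zero] at hrank

lemma le_singularValue (hM : ∀ v ∈ V, a * l2norm v ≤ l2norm (M *ᵥ v)) {k : ℕ} (hk : k ≠ 0)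
    (hkV : k ≤ Module.finrank ℝ V) : a ≤ singularValue M k := by
  obtain ⟨U, hUV, rfl⟩ := exists_submodule_le_finrank_eq hkV
  refine le_singularValue_finrank ?_ fun v hv => hM v (hUV hv)
  rintro rfl
  exact hk (finrank_bot ℝ _)

lemma finrank_le_card_of_mul_l2norm_le (ha : 0 < a)
    (hM : ∀ v ∈ V, a * l2norm v ≤ l2norm (M *ᵥ v)) :
    Module.finrank ℝ V ≤ Fintype.card I := by
  have hinj : Function.Injective (M.mulVecLin ∘ₗ V.subtype) := by
    refine (injective_iff_map_eq_zero _).mpr fun v hv => Subtype.ext (l2norm_eq_zero.mp ?_)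
    have hMv : l2norm (M *ᵥ v.1) = 0 := l2norm_eq_zero.mpr hv
    nlinarith [hM v.1 v.2, l2norm_nonneg v.1]
  simpa using LinearMap.finrank_le_finrank_of_injective hinj

lemma finrank_rpow_mul_le_schattenNorm (ha : 0 < a) (hq : 0 < q)
    (hM : ∀ v ∈ V, a * l2norm v ≤ l2norm (M *ᵥ v)) :
    (Module.finrank ℝ V : ℝ) ^ (1 / q) * a ≤ schattenNorm M q := by
  set m := Module.finrank ℝ V
  have hm : m ≤ min (Fintype.card I) (Fintype.card J) :=
    le_min (finrank_le_card_of_mul_l2norm_le ha hM) (by simpa using V.finrank_le)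
  have hsum : m * a ^ q ≤ ∑ k ∈ Finset.Icc 1 (min (Fintype.card I) (Fintype.card J)),
      singularValue M k ^ q :=
    calc (m : ℝ) * a ^ q = ∑ _ ∈ Finset.Icc 1 m, a ^ q := by simp
      _ ≤ ∑ k ∈ Finset.Icc 1 m, singularValue M k ^ q := by
        gcongr with k hk
        obtain ⟨hk1, hkm⟩ := Finset.mem_Icc.mp hk
        exact le_singularValue hM (Nat.one_le_iff_ne_zero.mp hk1) hkm
      _ ≤ _ := Finset.sum_le_sum_of_subset_of_nonneg (Finset.Icc_subset_Icc_right hm)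
        fun k _ _ => Real.rpow_nonneg (singularValue_nonneg M k) q
  calc (m : ℝ) ^ (1 / q) * a = (m * a ^ q) ^ (1 / q) := by
        rw [Real.mul_rpow (by positivity) (by positivity), ← Real.rpow_mul ha.le,
          mul_one_div_cancel hq.ne', Real.rpow_one]
    _ ≤ schattenNorm M q := Real.rpow_le_rpow (by positivity) hsum (by positivity)

end SingularValues

section Fibers

variable {I J : Type*} [Fintype I] [DecidableEq J]

lemma card_fiber_comp_le {K : Type*} [Fintype K] {g : K → I} (hg : Function.Injective g)
    (f : I → J) (j : J) : #{k | (f ∘ g) k = j} ≤ #{i | f i = j} :=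
  Finset.card_le_card_of_injOn g (by simp [Set.MapsTo]) hg.injOn

variable [Fintype J]

lemma exists_card_fiber_le [Nonempty J] {N : ℕ} (h : Fintype.card I ≤ N * Fintype.card J) :
    ∃ f : I → J, ∀ j, #{i | f i = j} ≤ N := by
  obtain ⟨e⟩ : Nonempty (I ↪ Fin N × J) :=
    Function.Embedding.nonempty_of_card_le (by simpa using h)
  refine ⟨fun i => (e i).2, fun j => ?_⟩
  have hinj : Set.InjOn (fun i => (e i).1) {i | (e i).2 = j} := fun i hi k hk hik =>
    e.injective (Prod.ext hik (hi.trans hk.symm))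
  simpa using Finset.card_le_card_of_injOn (s := {i | (e i).2 = j}) (t := Finset.univ)
    (fun i => (e i).1) (by simp) (by simpa using hinj)

lemma card_le_card_large_fibers_mul_add {f : I → J} {N t : ℝ} (ht : 0 ≤ t)
    (hN : ∀ j, (#{i | f i = j} : ℝ) ≤ N) :
    (Fintype.card I : ℝ) ≤ #{j | t ≤ #{i | f i = j}} * N + Fintype.card J * t := by
  have hfiber (j : J) : (#{i | f i = j} : ℝ) ≤ (if t ≤ #{i | f i = j} then N else 0) + t := by
    split_ifs with hj
    · linarith [hN j]
    · linarith
  calc (Fintype.card I : ℝ) = ∑ j, (#{i | f i = j} : ℝ) := by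
        exact_mod_cast Finset.card_eq_sum_card_fiberwise (s := Finset.univ) (t := Finset.univ)
          (f := f) (by simp)
    _ ≤ ∑ j, ((if t ≤ #{i | f i = j} then N else 0) + t) := by
        gcongr with j
        exact hfiber j
    _ = _ := by simp [Finset.sum_add_distrib, ← Finset.sum_filter]

end Fibers

section MembershipMatrix

variable {I J : Type*} [DecidableEq J]

/-- The membership (0/1 incidence) matrix of the partition of `I` into the fibers of `f`: row `i`
is the standard basis vector `e_{f i}`. -/
def membershipMatrix (f : I → J) : Matrix I J ℝ := (1 : Matrix J J ℝ).submatrix f id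

lemma smul_membershipMatrix_submatrix {K : Type*} (a : ℝ) (f : I → J) (g : K → I) :
    (a • membershipMatrix f).submatrix g id = a • membershipMatrix (f ∘ g) := rfl

variable [Fintype J]

lemma membershipMatrix_mulVec (f : I → J) (v : J → ℝ) : membershipMatrix f *ᵥ v = v ∘ f := by
  ext i
  simp [membershipMatrix, Matrix.mulVec, dotProduct, Matrix.one_apply]

variable [Fintype I]

lemma frobNorm_smul_membershipMatrix (a : ℝ) (f : I → J) :
    frobNorm (a • membershipMatrix f) = √(Fintype.card I * a ^ 2) := by
  simp [frobNorm, membershipMatrix, Matrix.one_apply]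

lemma l2norm_comp (f : I → J) (v : J → ℝ) :
    l2norm (v ∘ f) = √(∑ j, #{i | f i = j} * v j ^ 2) := by
  simp only [l2norm, Function.comp_apply, ← Finset.sum_fiberwise' Finset.univ f (v · ^ 2),
    Finset.sum_const, nsmul_eq_mul]

lemma sqrt_mul_l2norm_le_l2norm_comp {f : I → J} {v : J → ℝ} {t : ℝ} (ht : 0 ≤ t)
    (hv : ∀ j, v j ≠ 0 → t ≤ #{i | f i = j}) : √t * l2norm v ≤ l2norm (v ∘ f) := by
  rw [l2norm_comp, l2norm, ← Real.sqrt_mul ht, Finset.mul_sum]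
  gcongr √(∑ j, ?_) with j
  by_cases hj : v j = 0
  · simp [hj]
  · gcongr
    exact hv j hj

lemma card_large_fibers_rpow_mul_le_schattenNorm (f : I → J) {a t q : ℝ} (ha : 0 < a)
    (ht : 0 < t) (hq : 0 < q) :
    (#{j | t ≤ #{i | f i = j}} : ℝ) ^ (1 / q) * (a * √t) ≤
      schattenNorm (a • membershipMatrix f) q := by
  have hrank : Module.finrank ℝ (Pi.spanSubset ℝ {j | t ≤ #{i | f i = j}}) =
      #{j | t ≤ #{i | f i = j}} := by
    rw [Pi.dim_spanSubset, ← Set.ncard_coe_finset, Finset.coe_filter_univ]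
  rw [← hrank]
  refine finrank_rpow_mul_le_schattenNorm (by positivity) hq fun v hv => ?_
  have hsupp : ∀ j, v j ≠ 0 → t ≤ #{i | f i = j} := fun j hj => by
    by_contra hjt
    exact hj (Pi.mem_spanSubset_iff.mp hv j hjt)
  rw [Matrix.smul_mulVec, membershipMatrix_mulVec, l2norm_smul, abs_of_pos ha, mul_assoc]
  gcongr
  exact sqrt_mul_l2norm_le_l2norm_comp ht.le hsupp

end MembershipMatrix

section Scattering

variable {I J K : Type*} [Fintype I] [Fintype J] [Fintype K] [Nonempty J]

lemma exists_card_fiber_le_two_mul_div [DecidableEq J]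
    (hJI : Fintype.card J ≤ Fintype.card I) :
    ∃ f : I → J, ∀ j, (#{i | f i = j} : ℝ) ≤ 2 * Fintype.card I / Fintype.card J := by
  set s := Fintype.card I
  set r := Fintype.card J
  have hr : 0 < r := Fintype.card_pos
  obtain ⟨f, hf⟩ := exists_card_fiber_le (I := I) (J := J) (N := s / r + 1)
    (by rw [add_one_mul]; exact (Nat.lt_div_mul_add hr).le)
  refine ⟨f, fun j => (Nat.cast_le.mpr (hf j)).trans ?_⟩
  rw [le_div_iff₀ (by positivity)]
  exact_mod_cast show (s / r + 1) * r ≤ 2 * s by linarith [Nat.div_mul_le_self s r]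

lemma mul_card_div_four_le_card_large_fibers [DecidableEq J] {g : K → J} {c s : ℝ}
    (hc : 0 ≤ c) (hs : 0 < s) (hg : ∀ j, (#{k | g k = j} : ℝ) ≤ 2 * s / Fintype.card J)
    (hK : c * s ≤ Fintype.card K) :
    c * Fintype.card J / 4 ≤ #{j | c * s / (2 * Fintype.card J) ≤ #{k | g k = j}} := by
  set r := (Fintype.card J : ℝ)
  set G := (#{j | c * s / (2 * r) ≤ #{k | g k = j}} : ℝ)
  have hr : 0 < r := Nat.cast_pos.mpr Fintype.card_pos
  have hcount : c * s ≤ G * (2 * s / r) + r * (c * s / (2 * r)) :=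
    hK.trans (card_le_card_large_fibers_mul_add (by positivity) hg)
  have hmul : c * r / 4 * (2 * s / r) ≤ G * (2 * s / r) := by
    calc c * r / 4 * (2 * s / r) = c * s - r * (c * s / (2 * r)) := by field_simp; norm_num
      _ ≤ G * (2 * s / r) := by linarith
  exact le_of_mul_le_mul_right hmul (by positivity)

lemma mul_rpow_sub_half_le {c r q : ℝ} (hc : 0 ≤ c) (hc4 : c ≤ 4) (hr : 0 < r) (hq : 1 ≤ q) :
    c / 4 * √(c / 2) * r ^ (1 / q - 1 / 2) ≤ (c * r / 4) ^ (1 / q) * √(c / (2 * r)) := by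
  have hrpow : c / 4 ≤ (c / 4) ^ (1 / q) :=
    Real.self_le_rpow_of_le_one (by positivity) (by linarith)
      ((div_le_one (by positivity)).mpr hq)
  calc c / 4 * √(c / 2) * r ^ (1 / q - 1 / 2)
      ≤ (c / 4) ^ (1 / q) * √(c / 2) * r ^ (1 / q - 1 / 2) := by gcongr
    _ = (c / 4 * r) ^ (1 / q) * √(c / 2 / r) := by
      rw [Real.rpow_sub hr, ← Real.sqrt_eq_rpow, Real.mul_rpow (by positivity) hr.le,
        Real.sqrt_div (by positivity) r]
      ring
    _ = (c * r / 4) ^ (1 / q) * √(c / (2 * r)) := by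
      rw [div_div, div_mul_eq_mul_div]

lemma le_schattenNorm_smul_membershipMatrix [DecidableEq J] {g : K → J} {c s q : ℝ}
    (hc : 0 < c) (hc4 : c ≤ 4) (hs : 0 < s) (hq : 1 ≤ q)
    (hg : ∀ j, (#{k | g k = j} : ℝ) ≤ 2 * s / Fintype.card J) (hK : c * s ≤ Fintype.card K) :
    c / 4 * √(c / 2) * (Fintype.card J : ℝ) ^ (1 / q - 1 / 2) ≤
      schattenNorm ((√s)⁻¹ • membershipMatrix g) q := by
  set r := (Fintype.card J : ℝ)
  have hr : 0 < r := Nat.cast_pos.mpr Fintype.card_pos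
  calc c / 4 * √(c / 2) * r ^ (1 / q - 1 / 2)
      ≤ (c * r / 4) ^ (1 / q) * √(c / (2 * r)) := mul_rpow_sub_half_le hc.le hc4 hr hq
    _ = (c * r / 4) ^ (1 / q) * ((√s)⁻¹ * √(c * s / (2 * r))) := by
      rw [← Real.sqrt_inv, ← Real.sqrt_mul (by positivity)]
      congr 2
      field_simp
    _ ≤ (#{j | c * s / (2 * r) ≤ #{k | g k = j}} : ℝ) ^ (1 / q) *
          ((√s)⁻¹ * √(c * s / (2 * r))) := by
      gcongr
      exact mul_card_div_four_le_card_large_fibers hc.le hs hg hK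
    _ ≤ schattenNorm ((√s)⁻¹ • membershipMatrix g) q :=
      card_large_fibers_rpow_mul_le_schattenNorm g (by positivity) (by positivity) (by positivity)

end Scattering

theorem stmt13_general {I J : Type*} [Fintype I] [Fintype J] [Nonempty J]
    (hJI : Fintype.card J ≤ Fintype.card I) :
    ∃ W : Matrix I J ℝ, frobNorm W ≤ 1 ∧
      ∀ c : ℝ, 0 < c → ∀ B : Finset I, c * Fintype.card I ≤ #B → ∀ q : ℝ, 1 ≤ q →
        c / 4 * √(c / 2) * (Fintype.card J : ℝ) ^ (1 / q - 1 / 2) ≤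
          schattenNorm (W.submatrix (fun i : {x // x ∈ B} => (i : I)) id) q := by
  classical
  have hs : (0 : ℝ) < Fintype.card I := Nat.cast_pos.mpr (Fintype.card_pos.trans_le hJI)
  obtain ⟨f, hf⟩ := exists_card_fiber_le_two_mul_div hJI
  refine ⟨(√(Fintype.card I))⁻¹ • membershipMatrix f, ?_, fun c hc B hB q hq => ?_⟩
  · rw [frobNorm_smul_membershipMatrix, inv_pow, Real.sq_sqrt hs.le, mul_inv_cancel₀ hs.ne',
      Real.sqrt_one]
  · have hc1 : c ≤ 1 := le_of_mul_le_mul_right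
      (hB.trans (by simpa using Finset.card_le_univ B)) hs
    rw [smul_membershipMatrix_submatrix]
    exact le_schattenNorm_smul_membershipMatrix hc (by linarith) hs hq
      (fun j => (Nat.cast_le.mpr (card_fiber_comp_le Subtype.val_injective f j)).trans (hf j))
      (by simpa using hB)

/-- Scattering lemma. There are absolute constants c₀ ∈ (1/2, 1) and c₁ > 0 such
that for all integers s ≥ r ≥ 1 there is a matrix W ∈ ℝ^{s×r} with ‖W‖_F ≤ 1 such that for every
B ⊂ {1,…,s} with |B| ≥ c₀s and every q ∈ [1,2], ‖W_{B*}‖_{S_q} ≥ c₁ r^{1/q − 1/2}. -/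
theorem stmt13 :
    ∃ c0 c1 : ℝ, c0 ∈ Set.Ioo (1 / 2 : ℝ) 1 ∧ 0 < c1 ∧
    ∀ s r : ℕ, 1 ≤ r → r ≤ s →
    ∃ W : Matrix (Fin s) (Fin r) ℝ, frobNorm W ≤ 1 ∧
      ∀ B : Finset (Fin s), c0 * (s : ℝ) ≤ (B.card : ℝ) →
      ∀ q ∈ Set.Icc (1 : ℝ) 2,
        c1 * (r : ℝ) ^ (1 / q - 1 / 2) ≤
          schattenNorm (W.submatrix (fun i : {x // x ∈ B} => (i : Fin s)) id) q := by
  refine ⟨3 / 4, 3 / 4 / 4 * √(3 / 4 / 2), by norm_num, by positivity, fun s r hr hrs => ?_⟩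
  have : Nonempty (Fin r) := ⟨⟨0, hr⟩⟩
  obtain ⟨W, hW, hS⟩ := stmt13_general (I := Fin s) (J := Fin r) (by simpa using hrs)
  exact ⟨W, hW, fun B hB q hq => by
    simpa using hS (3 / 4) (by norm_num) B (by simpa using hB) q hq.1⟩

end
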